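/- Let k be a G-graded field and A a finitely generated graded k-algebra that is a graded domain. Then the graded integral closure of A in its graded fraction field K = Frac_G(A) is finite as an A-module, and in particular is a finitely generated graded k-algebra. -/

import Mathlib

universe u v

/-- A `G`-graded commutative ring structure on `A`: graded pieces `deg g`,
multiplicativity of the grading, and an internal direct sum decomposition
recorded by the homogeneous-component function `comp`. -/
structure GradedStr (G : Type u) [CommGroup G] (A : Type v) [CommRing A] where
  deg : G → AddSubgroup A
  one_mem : (1 : A) ∈ deg 1
  mul_mem : ∀ {g h : G} {a b : A}, a ∈ deg g → b ∈ deg h → a * b ∈ deg (g * h)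
  comp : A → G → A
  comp_mem : ∀ a g, comp a g ∈ deg g
  comp_add : ∀ a b g, comp (a + b) g = comp a g + comp b g
  comp_of_mem : ∀ {a : A} {g : G}, a ∈ deg g → comp a g = a
  comp_of_mem_ne : ∀ {a : A} {g g' : G}, a ∈ deg g → g' ≠ g → comp a g' = 0
  finite_support : ∀ a : A, (Function.support (comp a)).Finite
  sum_comp : ∀ a : A, ∑ᶠ g, comp a g = a

namespace GradedStr

variable {G : Type u} [CommGroup G] {A : Type v} [CommRing A]

/-- `a` is homogeneous: it lies in some graded piece. -/
def IsHomog (𝒜 : GradedStr G A) (a : A) : Prop := ∃ g, a ∈ 𝒜.deg g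

/-- A `G`-graded field: a nonzero graded ring in which every nonzero homogeneous
element is invertible. -/
def IsGradedField (𝒜 : GradedStr G A) : Prop :=
  Nontrivial A ∧ ∀ a : A, 𝒜.IsHomog a → a ≠ 0 → IsUnit a

/-- A graded subring: a subring stable under taking homogeneous components. -/
def IsGradedSubring (𝒜 : GradedStr G A) (S : Subring A) : Prop :=
  ∀ x ∈ S, ∀ g, 𝒜.comp x g ∈ S

/-- A graded subfield of a graded field: a graded subring containing the inverses of
its nonzero homogeneous elements. -/
def IsGradedSubfield (𝒜 : GradedStr G A) (S : Subring A) : Prop :=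
  𝒜.IsGradedSubring S ∧ ∀ x ∈ S, 𝒜.IsHomog x → x ≠ 0 → Ring.inverse x ∈ S

/-- The additive subgroup of homogeneous polynomials of grading `h` in `K[g₀⁻¹ T]`,
the polynomial ring in which `T` is declared homogeneous of grading `g₀`: the
coefficient of `T^n` must be homogeneous of grading `h * g₀⁻ⁿ`. -/
def polyDeg (𝒜 : GradedStr G A) (g₀ h : G) : AddSubgroup (Polynomial A) where
  carrier := {p | ∀ n : ℕ, p.coeff n ∈ 𝒜.deg (h * (g₀ ^ n)⁻¹)}
  zero_mem' := by intro n; simpa using (𝒜.deg (h * (g₀ ^ n)⁻¹)).zero_mem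
  add_mem' := by
    intro p q hp hq n
    rw [Polynomial.coeff_add]
    exact (𝒜.deg _).add_mem (hp n) (hq n)
  neg_mem' := by
    intro p hp n
    rw [Polynomial.coeff_neg]
    exact (𝒜.deg _).neg_mem (hp n)

/-- A homogeneous polynomial in `K[g₀⁻¹T]`. -/
def IsHomogPoly (𝒜 : GradedStr G A) (g₀ : G) (p : Polynomial A) : Prop :=
  ∃ h, p ∈ 𝒜.polyDeg g₀ h

/-- The graded fraction field of a graded subring of a graded field, computed inside
the ambient graded field: the subring generated by `S` together with the inverses of
the nonzero homogeneous elements of `S`. -/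
def fracIn (𝒜 : GradedStr G A) (S : Subring A) : Subring A :=
  Subring.closure (↑S ∪ {y : A | ∃ x ∈ S, x ≠ 0 ∧ 𝒜.IsHomog x ∧ y = Ring.inverse x})

end GradedStr

/-- `x` is integral over the subring `S` (satisfies a monic polynomial equation with
coefficients in `S`). -/
def IntegralOver {A : Type v} [CommRing A] (S : Subring A) (x : A) : Prop :=
  ∃ p : Polynomial A, p.Monic ∧ (∀ n, p.coeff n ∈ S) ∧ Polynomial.eval x p = 0

/-- Algebraic independence of a family of elements over a subring: the evaluation map
from the (multivariate) polynomial ring is injective.  (For homogeneous elements this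
is graded algebraic independence, the grading playing no role in injectivity.) -/
def AlgIndepOver {A : Type v} [CommRing A] {ι : Type*} (S : Subring A) (T : ι → A) : Prop :=
  Function.Injective (MvPolynomial.eval₂Hom S.subtype T)

/-- A graded valuation ring of the graded subfield `F` of the ambient graded field:
a graded subring `O ⊆ F` such that every nonzero homogeneous element `f` of `F`
satisfies `f ∈ O` or `f⁻¹ ∈ O`. -/
def IsGVRofSubfield {G : Type u} [CommGroup G] {A : Type v} [CommRing A]
    (𝒜 : GradedStr G A) (F : Subring A) (O : Subring A) : Prop :=
  O ≤ F ∧ 𝒜.IsGradedSubring O ∧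
    ∀ f ∈ F, f ≠ 0 → 𝒜.IsHomog f → f ∈ O ∨ Ring.inverse f ∈ O

/-!
If `s` is the finite set of homogeneous generators of `A`, pulling the grading back along the map
`φ : ℤˢ → G` that sends each generator to its degree turns `A` into a `ℤˢ`-graded ring, encoded in
the group algebra `K[ℤˢ]`. Since `ℤˢ` is torsion-free, this is an honest domain, and it is finitely
generated over the field of elements of degree `1` of `k`: besides the generators, it only needs
units of `k` whose degrees generate the preimage under `φ` of the group of degrees of units of `k`.

For a finitely generated domain `D` over an arbitrary field, the integral closure is finite: over a
polynomial ring `P` given by Noether normalization it suffices to find one nonzero `P`-linear form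
on the integral closure `C`, because `(x, y) ↦ l (x * y)` then embeds `C` into a finite free
`P`-module. In the separable case `l` is the trace; in general, a power of Frobenius maps `C` into
its separable part, and a splitting of Frobenius on `P` makes the composite with the trace linear.

A homogeneous element of degree `φ m` integral over `A` lifts to degree `m`, where it is integral
over the pullback of `A`; applying the augmentation `K[ℤˢ] → K` to finitely many generators gives
generators for these elements over `A`. Units of `k` take care of the degrees outside the image of
`φ`.
-/

section FrobeniusSplitting

/-- A splitting of the `p`-th power map: an additive endomorphism `ψ` of `R` which is
`p⁻¹`-linear, i.e. `ψ (a ^ p * x) = a * ψ x`, and fixes `1`. The number `p` is meant to be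
(a power of) the exponential characteristic, so that in characteristic zero there is no condition.
-/
def IsFrobeniusSplit (p : ℕ) (R : Type*) [CommSemiring R] : Prop :=
  ∃ ψ : R →+ R, ψ 1 = 1 ∧ ∀ a x, ψ (a ^ p * x) = a * ψ x

theorem isFrobeniusSplit_of_field (p : ℕ) (k : Type*) [Field k] [ExpChar k p] :
    IsFrobeniusSplit p k := by
  let F := (frobenius k p).fieldRange
  obtain ⟨r, hr⟩ := LinearMap.exists_leftInverse_of_injective (Algebra.linearMap F k)
    (LinearMap.ker_eq_bot.mpr (algebraMap F k).injective)
  let e : k ≃+* F := RingEquiv.ofBijective (frobenius k p).rangeRestrictField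
    ⟨RingHom.injective _, (frobenius k p).rangeRestrictField_bijective.2⟩
  have hr_one : r 1 = 1 := by simpa using LinearMap.congr_fun hr 1
  refine ⟨e.symm.toAddMonoidHom.comp r.toAddMonoidHom, by simp [hr_one], fun a x => ?_⟩
  have hr_mul : r (a ^ p * x) = e a * r x := r.map_smul (e a) x
  simp [hr_mul]

namespace IsFrobeniusSplit

variable {R : Type*} [CommSemiring R] {p q : ℕ}

theorem mul (hp : IsFrobeniusSplit p R) (hq : IsFrobeniusSplit q R) :
    IsFrobeniusSplit (p * q) R := by
  obtain ⟨ψ, hψ_one, hψ⟩ := hp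
  obtain ⟨χ, hχ_one, hχ⟩ := hq
  exact ⟨ψ.comp χ, by simp [hψ_one, hχ_one], fun a x => by simp [pow_mul, hψ, hχ]⟩

theorem pow (hp : IsFrobeniusSplit p R) (e : ℕ) : IsFrobeniusSplit (p ^ e) R := by
  induction e with
  | zero => exact ⟨AddMonoidHom.id R, by simp, by simp⟩
  | succ e ih => exact pow_succ p e ▸ ih.mul hp

theorem mvPolynomial [ExpChar R p] (h : IsFrobeniusSplit p R) (σ : Type*) :
    IsFrobeniusSplit p (MvPolynomial σ R) := by
  classical
  obtain ⟨ψ, hψ_one, hψ⟩ := h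
  have hp : p ≠ 0 := (expChar_pos R p).ne'
  have hp_inj : Function.Injective (p • · : (σ →₀ ℕ) → σ →₀ ℕ) := smul_right_injective _ hp
  -- `ψ` applied to the coefficients of the monomials that are `p`-th powers
  let Ψ : MvPolynomial σ R →+ MvPolynomial σ R :=
    AddMonoidAlgebra.coeffAddEquiv.symm.toAddMonoidHom.comp <|
      (Finsupp.mapRange.addMonoidHom ψ).comp <|
        (Finsupp.comapDomain.addMonoidHom hp_inj).comp
          AddMonoidAlgebra.coeffAddEquiv.toAddMonoidHom
  have coeff_Ψ (f : MvPolynomial σ R) (m : σ →₀ ℕ) : (Ψ f).coeff m = ψ (f.coeff (p • m)) := rfl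
  refine ⟨Ψ, ?_, fun a f => ?_⟩
  · ext m
    have hzero : 0 = p • m ↔ 0 = m := by simp [eq_comm, hp]
    simp only [coeff_Ψ, MvPolynomial.coeff_one, hzero, apply_ite ψ, hψ_one, map_zero]
  · induction a using MvPolynomial.induction_on' with
    | add a b ha hb => rw [add_pow_expChar, add_mul, map_add, ha, hb, add_mul]
    | monomial s c =>
      ext m
      have hle : p • s ≤ p • m ↔ s ≤ m := by
        simp [Finsupp.le_def, Nat.mul_le_mul_left_iff hp.pos]
      have hsub : p • m - p • s = p • (m - s) := by ext i; simp [Nat.mul_sub]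
      simp only [MvPolynomial.monomial_pow, coeff_Ψ, MvPolynomial.coeff_monomial_mul', hle, hsub,
        apply_ite ψ, hψ, map_zero]

end IsFrobeniusSplit

end FrobeniusSplitting

section LinearForms

theorem IsFrobeniusSplit.exists_linearMap_ne_zero {q : ℕ} {P C C' : Type*} [CommRing P] [CommRing C]
    [CommRing C'] [Algebra P C] [Algebra P C'] (hP : IsFrobeniusSplit q P) (hq : q ≠ 0)
    (F : C →+* C') (hF : ∀ r, F (algebraMap P C r) = algebraMap P C' r ^ q)
    {l : C' →ₗ[P] P} (hl : l ≠ 0) : ∃ l' : C →ₗ[P] P, l' ≠ 0 := by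
  obtain ⟨ψ, hψ_one, hψ⟩ := hP
  obtain ⟨c, hc⟩ : ∃ c, l c ≠ 0 := by simpa using DFunLike.ne_iff.mp hl
  let l' : C →ₗ[P] P :=
    { toFun b := ψ (l (F b * (l c ^ (q - 1) • c)))
      map_add' a b := by simp only [map_add, add_mul]
      map_smul' r b := by
        have : F (r • b) * (l c ^ (q - 1) • c) = r ^ q • (F b * (l c ^ (q - 1) • c)) := by
          rw [Algebra.smul_def, map_mul, hF, ← map_pow, ← Algebra.smul_def, smul_mul_assoc]
        rw [this, map_smul, smul_eq_mul, hψ, RingHom.id_apply, smul_eq_mul] }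
  have hl'_one : l' 1 = l c :=
    calc ψ (l (F 1 * (l c ^ (q - 1) • c))) = ψ (l c ^ q * 1) := by
          rw [map_one, one_mul, map_smul, smul_eq_mul, pow_sub_one_mul hq, mul_one]
      _ = l c := by rw [hψ, hψ_one, mul_one]
  exact ⟨l', fun h => hc <| by rw [← hl'_one, h, LinearMap.zero_apply]⟩

theorem moduleFinite_of_linearMap_ne_zero {P C : Type*} [CommRing P] [IsDomain P]
    [IsNoetherianRing P] [CommRing C] [IsDomain C] [Algebra P C] [Algebra.IsAlgebraic P C]
    {N : Submodule P C} (hN : N.FG) (hN_tors : ∀ x : C, ∃ d : P, d ≠ 0 ∧ d • x ∈ N)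
    {l : C →ₗ[P] P} (hl : l ≠ 0) : Module.Finite P C := by
  obtain ⟨w, rfl⟩ := hN
  let Φ : C →ₗ[P] (w → P) := LinearMap.pi fun i => l.comp (LinearMap.mulLeft P (i : C))
  suffices Function.Injective Φ from Module.Finite.of_injective Φ this
  rw [injective_iff_map_eq_zero]
  intro b hb
  have l_span_mul : ∀ x ∈ Submodule.span P (w : Set C), l (x * b) = 0 := fun x hx => by
    induction hx using Submodule.span_induction with
    | mem x hx => exact congrFun hb ⟨x, hx⟩
    | zero => simp
    | add x y _ _ hx hy => rw [add_mul, map_add, hx, hy, add_zero]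
    | smul r x _ hx => rw [smul_mul_assoc, map_smul, hx, smul_zero]
  have l_mul (x : C) : l (x * b) = 0 := by
    obtain ⟨d, hd, hdx⟩ := hN_tors x
    have h := l_span_mul _ hdx
    rw [smul_mul_assoc, map_smul] at h
    exact (smul_eq_zero.mp h).resolve_left hd
  by_contra hb_ne
  obtain ⟨y, hy, b', hyb⟩ := (Algebra.IsAlgebraic.isAlgebraic (R := P) b).exists_nonzero_dvd
    (mem_nonZeroDivisors_of_ne_zero hb_ne)
  refine hl (LinearMap.ext fun c => (smul_eq_zero.mp ?_).resolve_left hy)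
  rw [← map_smul, Algebra.smul_def, hyb, mul_comm b b', mul_right_comm, l_mul]

end LinearForms

section IntegralClosure

variable (P K₀ L : Type*) [CommRing P] [IsDomain P] [Field K₀] [Algebra P K₀]
  [IsFractionRing P K₀] [Field L] [Algebra K₀ L] [Algebra P L] [IsScalarTower P K₀ L]
  [FiniteDimensional K₀ L]

include K₀

theorem exists_fg_submodule_integralClosure_isTorsion_quotient :
    ∃ N : Submodule P (integralClosure P L), N.FG ∧
      ∀ x : integralClosure P L, ∃ d : P, d ≠ 0 ∧ d • x ∈ N := by
  classical
  obtain ⟨s, w, hw⟩ := FiniteDimensional.exists_is_basis_integral P K₀ L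
  let w' (i : s) : integralClosure P L := ⟨w i, hw i⟩
  refine ⟨Submodule.span P (Set.range w'), Submodule.fg_span (Set.finite_range w'), fun x => ?_⟩
  obtain ⟨⟨d, hd⟩, hdx⟩ :=
    IsLocalization.exist_integer_multiples_of_finite (nonZeroDivisors P) (w.repr (x : L))
  choose c hc using hdx
  have hsum : d • x = ∑ i, c i • w' i := by
    apply Subtype.ext
    calc d • (x : L) = ∑ i, (d • w.repr (x : L) i) • w i := by
          conv_lhs => rw [← w.sum_repr (x : L), Finset.smul_sum]
          simp only [smul_assoc]
      _ = ∑ i, c i • w i := Finset.sum_congr rfl fun i _ => by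
          rw [← algebraMap_smul K₀ (c i), hc i]
      _ = ((∑ i, c i • w' i : integralClosure P L) : L) := by simp [w']
  exact ⟨d, nonZeroDivisors.ne_zero hd, hsum ▸ Submodule.sum_mem _ fun i _ =>
    Submodule.smul_mem _ _ (Submodule.subset_span ⟨i, rfl⟩)⟩

theorem exists_linearMap_integralClosure_ne_zero_of_isSeparable [IsIntegrallyClosed P]
    [Algebra.IsSeparable K₀ L] : ∃ l : integralClosure P L →ₗ[P] P, l ≠ 0 := by
  have : Algebra.IsAlgebraic P K₀ := IsLocalization.isAlgebraic K₀ (nonZeroDivisors P)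
  have : Algebra.IsAlgebraic P L := .trans P K₀ L
  obtain ⟨c, hc⟩ := Algebra.trace_surjective K₀ L 1
  obtain ⟨y, hy, hyc⟩ := (Algebra.IsAlgebraic.isAlgebraic (R := P) c).exists_integral_multiple
  refine ⟨Algebra.intTraceAux P K₀ L (integralClosure P L), fun h => hy ?_⟩
  apply IsFractionRing.injective P K₀
  calc algebraMap P K₀ y = Algebra.trace K₀ L (y • c) := by
        rw [← algebraMap_smul K₀, map_smul, hc, smul_eq_mul, mul_one]
    _ = algebraMap P K₀ (Algebra.intTraceAux P K₀ L (integralClosure P L) ⟨y • c, hyc⟩) :=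
        (Algebra.map_intTraceAux (A := P) (⟨y • c, hyc⟩ : integralClosure P L)).symm
    _ = algebraMap P K₀ 0 := by rw [h, LinearMap.zero_apply]

theorem exists_linearMap_integralClosure_ne_zero [IsIntegrallyClosed P]
    {p : ℕ} [ExpChar P p] (hP : IsFrobeniusSplit p P) :
    ∃ l : integralClosure P L →ₗ[P] P, l ≠ 0 := by
  let E := separableClosure K₀ L
  obtain ⟨l, hl⟩ := exists_linearMap_integralClosure_ne_zero_of_isSeparable P K₀ E
  have : ExpChar K₀ p := expChar_of_injective_ringHom (IsFractionRing.injective P K₀) p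
  have : ExpChar E p := expChar_of_injective_ringHom (algebraMap K₀ E).injective p
  have : IsScalarTower P E L := .of_algebraMap_eq fun _ => rfl
  let e := IsPurelyInseparable.exponent E L
  let fr : L →+* E := IsPurelyInseparable.iterateFrobenius E L p le_rfl
  have hfr (a : L) : algebraMap E L (fr a) = a ^ p ^ e :=
    IsPurelyInseparable.algebraMap_iterateFrobenius E p le_rfl a
  have isIntegral_fr (a : integralClosure P L) : IsIntegral P (fr a) := by
    rw [← isIntegral_algebraMap_iff (algebraMap E L).injective, hfr]
    exact a.2.pow _
  let F : integralClosure P L →+* integralClosure P E :=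
    (fr.comp (algebraMap (integralClosure P L) L)).codRestrict _ isIntegral_fr
  have hF (r : P) : F (algebraMap P _ r) = algebraMap P _ r ^ p ^ e := by
    apply Subtype.ext
    apply (algebraMap E L).injective
    exact hfr _
  exact (hP.pow e).exists_linearMap_ne_zero (pow_ne_zero e (expChar_pos P p).ne') F hF hl

theorem integralClosure_finite_of_isFrobeniusSplit [IsNoetherianRing P] [IsIntegrallyClosed P]
    {p : ℕ} [ExpChar P p] (hP : IsFrobeniusSplit p P) : Module.Finite P (integralClosure P L) := by
  obtain ⟨N, hN, hN_tors⟩ := exists_fg_submodule_integralClosure_isTorsion_quotient P K₀ L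
  obtain ⟨l, hl⟩ := exists_linearMap_integralClosure_ne_zero P K₀ L hP
  exact moduleFinite_of_linearMap_ne_zero hN hN_tors hl

end IntegralClosure

section FiniteType

theorem integralClosure_finite_of_finiteType (k D K L : Type*) [Field k] [CommRing D] [IsDomain D]
    [Algebra k D] [Algebra.FiniteType k D] [Field K] [Algebra D K] [IsFractionRing D K] [Field L]
    [Algebra K L] [Algebra D L] [IsScalarTower D K L] [FiniteDimensional K L] :
    Module.Finite D (integralClosure D L) := by
  obtain ⟨n, f, hf, hf_fin⟩ := exists_finite_inj_algHom_of_fg k D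
  let P := MvPolynomial (Fin n) k
  let : Algebra P D := f.toRingHom.toAlgebra
  let : Algebra P K := ((algebraMap D K).comp f.toRingHom).toAlgebra
  let : Algebra P L := ((algebraMap D L).comp f.toRingHom).toAlgebra
  have : Module.Finite P D := hf_fin
  have : FaithfulSMul D L := .trans D K L
  have : FaithfulSMul P D := (faithfulSMul_iff_algebraMap_injective P D).mpr hf
  have : FaithfulSMul P L := (faithfulSMul_iff_algebraMap_injective P L).mpr <|
    (FaithfulSMul.algebraMap_injective D L).comp hf
  have : IsScalarTower P D L := .of_algebraMap_eq fun _ => rfl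
  let : Algebra (FractionRing P) L := FractionRing.liftAlgebra P L
  have : Algebra.EssFiniteType D K := .of_isLocalization K (nonZeroDivisors D)
  have : Algebra.EssFiniteType D L := .comp D K L
  have : Algebra.EssFiniteType P L := .comp P D L
  have : Algebra.EssFiniteType (FractionRing P) L := .of_comp P (FractionRing P) L
  have : Algebra.IsAlgebraic D K := IsLocalization.isAlgebraic K (nonZeroDivisors D)
  have : Algebra.IsAlgebraic D L := .trans D K L
  have : Algebra.IsAlgebraic P L := .trans P D L
  have : Algebra.IsAlgebraic (FractionRing P) L :=
    (IsFractionRing.comap_isAlgebraic_iff (A := P) (C := L)).mp ‹_›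
  have : FiniteDimensional (FractionRing P) L := Algebra.finite_of_essFiniteType_of_isAlgebraic
  have : Module.Finite P (integralClosure P L) :=
    integralClosure_finite_of_isFrobeniusSplit P (FractionRing P) L
      ((isFrobeniusSplit_of_field (ringExpChar k) k).mvPolynomial (Fin n))
  have restrictScalars_eq : (integralClosure D L).restrictScalars P = integralClosure P L :=
    le_antisymm (fun x hx => isIntegral_trans (R := P) x hx) fun x hx => IsIntegral.tower_top hx
  have : Module.Finite P (integralClosure D L) := by
    change Module.Finite P ((integralClosure D L).restrictScalars P)
    rwa [restrictScalars_eq]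
  exact Module.Finite.of_restrictScalars_finite P D (integralClosure D L)

theorem isFractionRing_of_forall_exists_smul_mem_bot (D E K : Type*) [CommRing D] [CommRing E]
    [IsDomain E] [Algebra D E] [FaithfulSMul D E] [Field K] [Algebra E K] [IsFractionRing E K]
    [Algebra D K] [IsScalarTower D E K]
    (hE : ∀ z : E, ∃ d : D, d ≠ 0 ∧ d • z ∈ (⊥ : Subalgebra D E)) : IsFractionRing D K := by
  have : FaithfulSMul D K := .trans D E K
  refine IsFractionRing.of_field D K fun z => ?_
  obtain ⟨x, y, hy, rfl⟩ := IsFractionRing.div_surjective (A := E) z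
  obtain ⟨d, hd, a, ha⟩ := hE x
  obtain ⟨d', hd', a', ha'⟩ := hE y
  have hx : algebraMap D K a = algebraMap D K d * algebraMap E K x := by
    simpa [Algebra.smul_def, ← IsScalarTower.algebraMap_apply] using congr(algebraMap E K $ha)
  have hy' : algebraMap D K a' = algebraMap D K d' * algebraMap E K y := by
    simpa [Algebra.smul_def, ← IsScalarTower.algebraMap_apply] using congr(algebraMap E K $ha')
  have hd_ne : algebraMap D K d ≠ 0 := by simpa using hd
  have hd'_ne : algebraMap D K d' ≠ 0 := by simpa using hd'
  have hy_ne : algebraMap E K y ≠ 0 := by simpa using nonZeroDivisors.ne_zero hy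
  refine ⟨a * d', a' * d, ?_⟩
  rw [map_mul, map_mul, hx, hy']
  field_simp

theorem integralClosure_finite_of_forall_exists_smul_mem_bot (k D E : Type*) [Field k] [CommRing D]
    [Algebra k D] [Algebra.FiniteType k D] [CommRing E] [IsDomain E] [Algebra D E]
    [FaithfulSMul D E] (hE : ∀ z : E, ∃ d : D, d ≠ 0 ∧ d • z ∈ (⊥ : Subalgebra D E)) :
    Module.Finite D (integralClosure D E) := by
  let L := FractionRing E
  have : IsDomain D := (FaithfulSMul.algebraMap_injective D E).isDomain
  have : IsFractionRing D L := isFractionRing_of_forall_exists_smul_mem_bot D E L hE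
  have : Module.Finite D (integralClosure D L) := integralClosure_finite_of_finiteType k D L L
  have : IsNoetherianRing D := Algebra.FiniteType.isNoetherianRing k D
  have isIntegral_map (x : integralClosure D E) : IsIntegral D (algebraMap E L x) :=
    x.2.map (IsScalarTower.toAlgHom D E L)
  let Φ : integralClosure D E →ₐ[D] integralClosure D L :=
    ((IsScalarTower.toAlgHom D E L).comp (integralClosure D E).val).codRestrict _ isIntegral_map
  refine Module.Finite.of_injective Φ.toLinearMap fun x y hxy => ?_
  exact Subtype.ext (IsFractionRing.injective E L (congrArg Subtype.val hxy))

theorem fg_span_of_isIntegral {k R : Type*} [Field k] [CommRing R] [Algebra k R]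
    {D E : Subalgebra k R} [IsDomain E] (hDE : D ≤ E) (hD : D.FG)
    (hE : ∀ z ∈ E, ∃ d : D, d ≠ 0 ∧ d * z ∈ D) {X : Set R} (hXE : X ⊆ E)
    (hX : ∀ x ∈ X, IsIntegral D x) : (Submodule.span D X).FG := by
  have : Algebra.FiniteType k D := D.fg_iff_finiteType.mp hD
  have : IsNoetherianRing D := Algebra.FiniteType.isNoetherianRing k D
  let : Algebra D E := (Subalgebra.inclusion hDE).toAlgebra
  have : IsScalarTower D E R := .of_algebraMap_eq fun _ => rfl
  have : FaithfulSMul D E := (faithfulSMul_iff_algebraMap_injective D E).mpr <|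
    Subalgebra.inclusion_injective hDE
  have : Module.Finite D (integralClosure D E) := by
    refine integralClosure_finite_of_forall_exists_smul_mem_bot k D E fun z => ?_
    obtain ⟨d, hd, hdz⟩ := hE z z.2
    exact ⟨d, hd, ⟨d * z, hdz⟩, rfl⟩
  let ι : integralClosure D E →ₐ[D] R :=
    (IsScalarTower.toAlgHom D E R).comp (integralClosure D E).val
  refine Submodule.FG.of_le (Module.Finite.fg_top.map ι.toLinearMap) (Submodule.span_le.mpr ?_)
  intro x hx
  have hx_int : IsIntegral D (⟨x, hXE hx⟩ : E) :=
    (isIntegral_algebraMap_iff (FaithfulSMul.algebraMap_injective E R)).mp (hX x hx)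
  exact ⟨⟨⟨x, hXE hx⟩, hx_int⟩, trivial, rfl⟩

end FiniteType

theorem integralOver_toSubring_iff {R S : Type*} [CommRing R] [CommRing S] [Algebra R S]
    (A : Subalgebra R S) (x : S) : IntegralOver A.toSubring x ↔ IsIntegral A x := by
  constructor
  · rintro ⟨p, hp, hp_mem, hp_eval⟩
    have hp_lifts : p ∈ Polynomial.lifts (algebraMap A S) :=
      (Polynomial.lifts_iff_coeff_lifts p).mpr fun n => ⟨⟨_, hp_mem n⟩, rfl⟩
    obtain ⟨q, rfl, -, hq⟩ := Polynomial.lifts_and_natDegree_eq_and_monic hp_lifts hp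
    exact ⟨q, hq, by rwa [← Polynomial.eval_map]⟩
  · rintro ⟨q, hq, hq_eval⟩
    refine ⟨q.map (algebraMap A S), hq.map _, fun n => ?_, by rwa [Polynomial.eval_map]⟩
    rw [Polynomial.coeff_map]
    exact (q.coeff n).2

theorem integralOver_of_addMonoidHom {R : Type*} [CommRing R] {S : Subring R} {y : R} (π : R →+ R)
    (hπ_one : π 1 = 1) (hπ_mul : ∀ x, π (x * y) = π x * y) {p : Polynomial R} (hp : p.Monic)
    (hp_eval : p.eval y = 0) (hp_mem : ∀ n, π (p.coeff n) ∈ S) : IntegralOver S y := by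
  have hπ_pow (x : R) (n : ℕ) : π (x * y ^ n) = π x * y ^ n := by
    induction n with
    | zero => simp only [pow_zero, mul_one]
    | succ n ih => rw [pow_succ, ← mul_assoc, hπ_mul, ih, mul_assoc]
  let q := ∑ n ∈ Finset.range (p.natDegree + 1), Polynomial.monomial n (π (p.coeff n))
  have coeff_q (n : ℕ) : q.coeff n = π (p.coeff n) := by
    rw [Polynomial.finsetSum_coeff]
    simp only [Polynomial.coeff_monomial, Finset.sum_ite_eq', Finset.mem_range, ite_eq_left_iff]
    intro hn
    rw [p.coeff_eq_zero_of_natDegree_lt (by lia), map_zero]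
  refine ⟨q, ?_, fun n => coeff_q n ▸ hp_mem n, ?_⟩
  · refine Polynomial.monic_of_natDegree_le_of_coeff_eq_one p.natDegree ?_ ?_
    · exact Polynomial.natDegree_sum_le_of_forall_le _ _ fun n hn =>
        (Polynomial.natDegree_monomial_le _).trans (Finset.mem_range_succ_iff.mp hn)
    · rw [coeff_q, hp.coeff_natDegree, hπ_one]
  · simp only [q, Polynomial.eval_finsetSum, Polynomial.eval_monomial, ← hπ_pow, ← map_sum,
      ← Polynomial.eval_eq_sum_range, hp_eval, map_zero]

theorem toSubring_adjoin_eq_closure {K : Type*} [CommRing K] (k : Subring K) (s : Set K) :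
    (Algebra.adjoin k s).toSubring = Subring.closure (k ∪ s) := by
  rw [Algebra.adjoin_eq_ring_closure]
  congr
  exact Subtype.range_coe

theorem map_mem_span_image {R R' k k' : Type*} [CommRing k] [CommRing R] [Algebra k R]
    [CommRing k'] [CommRing R'] [Algebra k' R'] {D : Subalgebra k R} {D' : Subalgebra k' R'}
    (f : R →+* R') (hf : ∀ d ∈ D, f d ∈ D') {T : Set R} {x : R} (hx : x ∈ Submodule.span D T) :
    f x ∈ Submodule.span D' (f '' T) := by
  induction hx using Submodule.span_induction with
  | mem x hx => exact Submodule.subset_span ⟨x, hx, rfl⟩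
  | zero => rw [map_zero]; exact Submodule.zero_mem _
  | add x y _ _ hx hy => rw [map_add]; exact Submodule.add_mem _ hx hy
  | smul d x _ hx =>
    rw [Algebra.smul_def, map_mul]
    exact Submodule.smul_mem _ (⟨f d, hf d d.2⟩ : D') hx

theorem fg_subgroup_multiplicative_finsupp_int {ι : Type*} [Finite ι]
    (M : Subgroup (Multiplicative (ι →₀ ℤ))) : M.FG := by
  rw [Subgroup.fg_iff_add_fg]
  have h := IsNoetherian.noetherian (AddSubgroup.toIntSubmodule (Subgroup.toAddSubgroup' M))
  rwa [Submodule.fg_iff_addSubgroup_fg] at h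

namespace GradedStr

variable {G K : Type*} [CommGroup G] [CommRing K] (𝒜 : GradedStr G K)

section Components

/-- The projection to the graded piece of degree `g`, as an additive homomorphism. -/
def compHom (g : G) : K →+ K := AddMonoidHom.mk' (𝒜.comp · g) (𝒜.comp_add · · g)

theorem comp_zero (g : G) : 𝒜.comp 0 g = 0 := (𝒜.compHom g).map_zero

theorem comp_neg (x : K) (g : G) : 𝒜.comp (-x) g = -𝒜.comp x g := (𝒜.compHom g).map_neg x

theorem comp_induction {motive : K → Prop} (x : K) (zero : motive 0)
    (add : ∀ a b, motive a → motive b → motive (a + b)) (comp : ∀ g, motive (𝒜.comp x g)) :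
    motive x := by
  rw [← 𝒜.sum_comp x, finsum_eq_sum _ (𝒜.finite_support x)]
  exact Finset.sum_induction _ motive add zero fun g _ => comp g

variable {𝒜}

theorem comp_mul_of_mem {h : G} {y : K} (hy : y ∈ 𝒜.deg h) (x : K) (g : G) :
    𝒜.comp (x * y) g = 𝒜.comp x (g * h⁻¹) * y := by
  refine 𝒜.comp_induction (motive := fun x => 𝒜.comp (x * y) g = 𝒜.comp x (g * h⁻¹) * y) x
    ?_ (fun a b ha hb => ?_) fun i => ?_
  · simp only [zero_mul, comp_zero]
  · simp only [add_mul, comp_add, ha, hb]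
  · have hi := 𝒜.comp_mem x i
    rcases eq_or_ne g (i * h) with rfl | hg
    · rw [𝒜.comp_of_mem (𝒜.mul_mem hi hy), mul_inv_cancel_right, 𝒜.comp_of_mem hi]
    · have hg' : g * h⁻¹ ≠ i := fun h' => hg (mul_inv_eq_iff_eq_mul.mp h')
      rw [𝒜.comp_of_mem_ne (𝒜.mul_mem hi hy) hg, 𝒜.comp_of_mem_ne hi hg', zero_mul]

theorem mem_deg_inv_of_mul_eq_one {g : G} {x y : K} (hx : x ∈ 𝒜.deg g) (hxy : x * y = 1) :
    y ∈ 𝒜.deg g⁻¹ := by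
  have hy : 𝒜.comp y g⁻¹ * x = 1 := by
    rw [← one_mul g⁻¹, ← comp_mul_of_mem hx, mul_comm, hxy, 𝒜.comp_of_mem 𝒜.one_mem]
  have : 𝒜.comp y g⁻¹ = y := by rw [← mul_one (𝒜.comp y g⁻¹), ← hxy, ← mul_assoc, hy, one_mul]
  exact this ▸ 𝒜.comp_mem y g⁻¹

end Components

section Subfield

theorem IsGradedSubfield.isUnit {𝒜 : GradedStr G K} {k : Subring K} (hk : 𝒜.IsGradedSubfield k)
    (hK : 𝒜.IsGradedField) {c : k} (hc : 𝒜.IsHomog (c : K)) (hc_ne : c ≠ 0) : IsUnit c := by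
  have hc_ne' : (c : K) ≠ 0 := by simpa using hc_ne
  exact .of_mul_eq_one ⟨Ring.inverse c, hk.2 c c.2 hc hc_ne'⟩
    (Subtype.ext (Ring.mul_inverse_cancel _ (hK.2 c hc hc_ne')))

/-- The subgroup of `G` formed by the degrees of the homogeneous units of a subring `k`. -/
def unitDegrees (k : Subring K) : Subgroup G where
  carrier := {g | ∃ u : kˣ, ((u : k) : K) ∈ 𝒜.deg g}
  one_mem' := ⟨1, 𝒜.one_mem⟩
  mul_mem' := by
    rintro g h ⟨u, hu⟩ ⟨v, hv⟩
    exact ⟨u * v, 𝒜.mul_mem hu hv⟩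
  inv_mem' := by
    rintro g ⟨u, hu⟩
    exact ⟨u⁻¹, mem_deg_inv_of_mul_eq_one hu (congrArg Subtype.val u.mul_inv)⟩

theorem exists_units_smul_mem_deg {k : Subring K} {H : Subgroup G} {g : G}
    (hg : g ∈ 𝒜.unitDegrees k ⊔ H) {x : K} (hx : x ∈ 𝒜.deg g) :
    ∃ u : kˣ, ∃ h ∈ H, u • x ∈ 𝒜.deg h := by
  obtain ⟨g₀, ⟨u, hu⟩, h, hh, rfl⟩ := Subgroup.mem_sup.mp hg
  refine ⟨u⁻¹, h, hh, ?_⟩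
  have hu_inv := mem_deg_inv_of_mul_eq_one hu (congrArg Subtype.val u.mul_inv)
  have := 𝒜.mul_mem hu_inv hx
  rwa [inv_mul_cancel_left] at this

/-- The subring of elements of degree `1` of a subring `k`. It is a field if `k` is a graded field.
-/
def degOneSubring (k : Subring K) : Subring K where
  carrier := {x | x ∈ k ∧ x ∈ 𝒜.deg 1}
  zero_mem' := ⟨k.zero_mem, (𝒜.deg 1).zero_mem⟩
  one_mem' := ⟨k.one_mem, 𝒜.one_mem⟩
  add_mem' hx hy := ⟨k.add_mem hx.1 hy.1, (𝒜.deg 1).add_mem hx.2 hy.2⟩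
  neg_mem' hx := ⟨k.neg_mem hx.1, (𝒜.deg 1).neg_mem hx.2⟩
  mul_mem' {x y} hx hy := ⟨k.mul_mem hx.1 hy.1, by simpa using 𝒜.mul_mem hx.2 hy.2⟩

theorem isField_degOneSubring (hK : 𝒜.IsGradedField) {k : Subring K} (hk : 𝒜.IsGradedSubfield k) :
    IsField (𝒜.degOneSubring k) := by
  have := hK.1
  refine ⟨⟨0, 1, zero_ne_one⟩, mul_comm, fun {c} hc => ?_⟩
  have hc_ne : (⟨c, c.2.1⟩ : k) ≠ 0 := fun h => hc (Subtype.ext congr($h))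
  obtain ⟨v, hv⟩ := (hk.isUnit hK ⟨1, c.2.2⟩ hc_ne).exists_right_inv
  have hv' : (c : K) * v = 1 := congr($hv)
  exact ⟨⟨v, v.2, by simpa using mem_deg_inv_of_mul_eq_one c.2.2 hv'⟩, Subtype.ext hv'⟩

end Subfield

section Pullback

variable {k : Subring K} {F : Type*} [CommGroup F] (φ : F →* G)

theorem coeff_single_mem {A : Subalgebra k K} {m : F} {a : K} (ha : a ∈ A)
    (ham : a ∈ 𝒜.deg (φ m)) (n : F) :
    (MonoidAlgebra.single m a).coeff n ∈ A ∧ (MonoidAlgebra.single m a).coeff n ∈ 𝒜.deg (φ n) := by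
  classical
  rw [MonoidAlgebra.coeff_single, Finsupp.single_apply]
  split_ifs with h
  · exact ⟨ha, h ▸ ham⟩
  · exact ⟨A.zero_mem, (𝒜.deg _).zero_mem⟩

/-- The pullback along `φ : F →* G` of the `G`-graded ring `A`: the `F`-graded ring whose piece of
degree `m` is the piece of `A` of degree `φ m`, encoded inside the group algebra `K[F]`. -/
def pullback (A : Subalgebra k K) : Subalgebra (𝒜.degOneSubring k) (MonoidAlgebra K F) where
  carrier := {f | ∀ m, f.coeff m ∈ A ∧ f.coeff m ∈ 𝒜.deg (φ m)}
  add_mem' {f g} hf hg m := by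
    rw [MonoidAlgebra.coeff_add]
    exact ⟨A.add_mem (hf m).1 (hg m).1, (𝒜.deg _).add_mem (hf m).2 (hg m).2⟩
  mul_mem' {f g} hf hg m := by
    classical
    rw [MonoidAlgebra.coeff_mul]
    refine ⟨A.sum_mem fun a _ => A.sum_mem fun b _ => ?_,
      (𝒜.deg _).sum_mem fun a _ => (𝒜.deg _).sum_mem fun b _ => ?_⟩ <;>
      dsimp only <;> split_ifs with h
    · exact A.mul_mem (hf a).1 (hg b).1
    · exact A.zero_mem
    · rw [← h, map_mul]
      exact 𝒜.mul_mem (hf a).2 (hg b).2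
    · exact (𝒜.deg _).zero_mem
  algebraMap_mem' c :=
    𝒜.coeff_single_mem φ (A.algebraMap_mem ⟨c, c.2.1⟩) (by rw [map_one]; exact c.2.2)

variable {𝒜 φ} {A : Subalgebra k K}

theorem single_mem_pullback {m : F} {a : K} (ha : a ∈ A) (ham : a ∈ 𝒜.deg (φ m)) :
    MonoidAlgebra.single m a ∈ 𝒜.pullback φ A :=
  𝒜.coeff_single_mem φ ha ham

theorem pullback_le_iff {S : Subalgebra (𝒜.degOneSubring k) (MonoidAlgebra K F)} :
    𝒜.pullback φ A ≤ S ↔ ∀ m, ∀ a ∈ A, a ∈ 𝒜.deg (φ m) → MonoidAlgebra.single m a ∈ S := by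
  refine ⟨fun h m a ha ham => h (single_mem_pullback ha ham), fun h f hf => ?_⟩
  rw [← MonoidAlgebra.sum_coeff_single f]
  exact S.sum_mem fun m _ => h m _ (hf m).1 (hf m).2

theorem pullback_mono {B : Subalgebra k K} (h : A ≤ B) : 𝒜.pullback φ A ≤ 𝒜.pullback φ B :=
  fun _ hf m => ⟨h (hf m).1, (hf m).2⟩

theorem isDomain_pullback [UniqueProds F] (hK : 𝒜.IsGradedField) :
    IsDomain (𝒜.pullback φ A) := by
  have := hK.1
  suffices NoZeroDivisors (𝒜.pullback φ A) from NoZeroDivisors.to_isDomain _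
  refine ⟨fun {f g} hfg => ?_⟩
  have hfg' : (f : MonoidAlgebra K F) * g = 0 := congr($hfg)
  by_contra! hne
  have hf : f.1.coeff.support.Nonempty := by simpa using hne.1
  have hg : g.1.coeff.support.Nonempty := by simpa using hne.2
  obtain ⟨a, ha, b, hb, hab⟩ := UniqueProds.uniqueMul_of_nonempty hf hg
  have hcoeff : f.1.coeff a * g.1.coeff b = 0 := by
    rw [← MonoidAlgebra.coeff_mul_mul_of_uniqueMul hab, hfg']
    rfl
  have hunit := hK.2 (f.1.coeff a) ⟨_, (f.2 a).2⟩ (Finsupp.mem_support_iff.mp ha)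
  exact Finsupp.mem_support_iff.mp hb (hunit.mul_right_eq_zero.mp hcoeff)

/-- The augmentation `K[F] → K`, which carries the pullback of `A` into `A`. -/
noncomputable def augmentation (K F : Type*) [CommRing K] [CommGroup F] :
    MonoidAlgebra K F →+* K :=
  (MonoidAlgebra.lift K K F 1).toRingHom

theorem augmentation_single (m : F) (a : K) : augmentation K F (.single m a) = a := by
  simp [augmentation]

theorem augmentation_mem {f : MonoidAlgebra K F} (hf : f ∈ 𝒜.pullback φ A) :
    augmentation K F f ∈ A := by
  have : augmentation K F f = f.coeff.sum fun _ b => b := by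
    simp [augmentation, MonoidAlgebra.lift_apply]
  rw [this]
  exact A.sum_mem fun m _ => (hf m).1

end Pullback

section Generators

variable {𝒜} {k : Subring K} {F : Type*} [CommGroup F] {φ : F →* G} {s : Set K} {e : s → F}

theorem exists_single_mem_closure (hs : ∀ a : s, (a : K) ∈ 𝒜.deg (φ (e a))) {x : K}
    (hx : x ∈ Submonoid.closure s) :
    ∃ m, x ∈ 𝒜.deg (φ m) ∧ MonoidAlgebra.single m x ∈
      Submonoid.closure (Set.range fun a : s => MonoidAlgebra.single (e a) (a : K)) := by
  induction hx using Submonoid.closure_induction with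
  | mem x hx => exact ⟨e ⟨x, hx⟩, hs ⟨x, hx⟩, Submonoid.subset_closure ⟨⟨x, hx⟩, rfl⟩⟩
  | one => exact ⟨1, by simpa using 𝒜.one_mem, Submonoid.one_mem _⟩
  | mul x y _ _ hx hy =>
    obtain ⟨m, hxm, hm⟩ := hx
    obtain ⟨n, hyn, hn⟩ := hy
    refine ⟨m * n, by simpa using 𝒜.mul_mem hxm hyn, ?_⟩
    rw [← MonoidAlgebra.single_mul_single]
    exact Submonoid.mul_mem _ hm hn

theorem pullback_adjoin (hk : 𝒜.IsGradedSubring k) (hs : ∀ a : s, (a : K) ∈ 𝒜.deg (φ (e a))) :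
    𝒜.pullback φ (Algebra.adjoin k s) = 𝒜.pullback φ ⊥ ⊔
      Algebra.adjoin _ (Set.range fun a : s => MonoidAlgebra.single (e a) (a : K)) := by
  apply le_antisymm
  · set S := 𝒜.pullback φ (⊥ : Subalgebra k K) ⊔
      Algebra.adjoin _ (Set.range fun a : s => MonoidAlgebra.single (e a) (a : K))
    suffices ∀ a ∈ Algebra.adjoin k s, ∀ m, MonoidAlgebra.single m (𝒜.comp a (φ m)) ∈ S from
      pullback_le_iff.mpr fun m a ha ham => by simpa only [𝒜.comp_of_mem ham] using this a ha m
    intro a ha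
    rw [← Subalgebra.mem_toSubmodule, Algebra.adjoin_eq_span] at ha
    induction ha using Submodule.closure_induction with
    | zero => simp only [comp_zero, MonoidAlgebra.single_zero, S.zero_mem, implies_true]
    | add a b _ _ ha hb =>
      intro m
      rw [comp_add, MonoidAlgebra.single_add]
      exact S.add_mem (ha m) (hb m)
    | smul_mem c x hx =>
      intro m
      obtain ⟨r, hxr, hr⟩ := exists_single_mem_closure hs hx
      have hr' := Submonoid.closure_le (S := (Algebra.adjoin (𝒜.degOneSubring k) _).toSubmonoid).mpr
        Algebra.subset_adjoin hr
      have hc : 𝒜.comp c (φ m * (φ r)⁻¹) ∈ (⊥ : Subalgebra k K) :=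
        Algebra.mem_bot.mpr ⟨⟨_, hk c c.2 _⟩, rfl⟩
      rw [Subring.smul_def, smul_eq_mul, comp_mul_of_mem hxr, ← inv_mul_cancel_right m r,
        ← MonoidAlgebra.single_mul_single]
      refine S.mul_mem (le_sup_left (a := 𝒜.pullback φ ⊥) (single_mem_pullback ?_ ?_))
        (le_sup_right (a := 𝒜.pullback φ ⊥) hr')
      · simpa using hc
      · simpa using 𝒜.comp_mem c (φ m * (φ r)⁻¹)
  · refine sup_le (pullback_mono bot_le) (Algebra.adjoin_le ?_)
    rintro _ ⟨a, rfl⟩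
    exact single_mem_pullback (Algebra.subset_adjoin a.2) (hs a)

theorem exists_units_single_mem {S : Subalgebra (𝒜.degOneSubring k) (MonoidAlgebra K F)}
    {t : Set F} (ht : ∀ m ∈ t, ∃ u : kˣ, ((u : k) : K) ∈ 𝒜.deg (φ m) ∧
      MonoidAlgebra.single m ((u : k) : K) ∈ S) {m : F} (hm : m ∈ Submonoid.closure t) :
    ∃ u : kˣ, ((u : k) : K) ∈ 𝒜.deg (φ m) ∧ MonoidAlgebra.single m ((u : k) : K) ∈ S := by
  induction hm using Submonoid.closure_induction with
  | mem m hm => exact ht m hm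
  | one => exact ⟨1, by simpa using 𝒜.one_mem, S.one_mem⟩
  | mul m n _ _ hm hn =>
    obtain ⟨u, hu, hum⟩ := hm
    obtain ⟨v, hv, hvn⟩ := hn
    refine ⟨u * v, by simpa using 𝒜.mul_mem hu hv, ?_⟩
    have := S.mul_mem hum hvn
    rwa [MonoidAlgebra.single_mul_single] at this

theorem fg_pullback_bot (hK : 𝒜.IsGradedField) (hk : 𝒜.IsGradedSubfield k)
    (hφ : ((𝒜.unitDegrees k).comap φ).FG) : (𝒜.pullback φ (⊥ : Subalgebra k K)).FG := by
  classical
  obtain ⟨t, ht⟩ := (Subgroup.fg_iff_submonoid_fg _).mp hφ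
  have mem_closure {m : F} : m ∈ Submonoid.closure t ↔ φ m ∈ 𝒜.unitDegrees k := by rw [ht]; rfl
  choose! u hu using fun m (hm : m ∈ t) => mem_closure.mp (Submonoid.subset_closure hm)
  refine ⟨t.image fun m => MonoidAlgebra.single m ((u m : k) : K), le_antisymm ?_ ?_⟩
  · refine Algebra.adjoin_le ?_
    rw [Finset.coe_image]
    rintro _ ⟨m, hm, rfl⟩
    exact single_mem_pullback (Algebra.mem_bot.mpr ⟨_, rfl⟩) (hu m hm)
  · set S := Algebra.adjoin (𝒜.degOneSubring k)
      (t.image fun m => MonoidAlgebra.single m ((u m : k) : K) : Set (MonoidAlgebra K F))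
    rw [pullback_le_iff]
    rintro m a ha ham
    obtain ⟨c, rfl : (c : K) = a⟩ := Algebra.mem_bot.mp ha
    rcases eq_or_ne c 0 with rfl | hc
    · rw [ZeroMemClass.coe_zero, MonoidAlgebra.single_zero]
      exact S.zero_mem
    have hm : m ∈ Submonoid.closure t := mem_closure.mpr ⟨(hk.isUnit hK ⟨_, ham⟩ hc).unit, ham⟩
    obtain ⟨v, hv, hvm⟩ := exists_units_single_mem (S := S) (fun n hn =>
      ⟨u n, hu n hn, Algebra.subset_adjoin (Finset.mem_coe.mpr (Finset.mem_image_of_mem _ hn))⟩) hm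
    have hv_inv := mem_deg_inv_of_mul_eq_one hv (congrArg Subtype.val v.mul_inv)
    have hd : ((c * ↑v⁻¹ : k) : K) ∈ 𝒜.deg 1 := by simpa using 𝒜.mul_mem ham hv_inv
    have hcv : ((c * ↑v⁻¹ : k) : K) * (v : k) = c := congr(($(v.inv_mul_cancel_right c) : K))
    have := S.smul_mem hvm (⟨_, (c * ↑v⁻¹ : k).2, hd⟩ : 𝒜.degOneSubring k)
    rwa [MonoidAlgebra.smul_single, Subring.smul_def, smul_eq_mul, hcv] at this

theorem fg_pullback_adjoin (hK : 𝒜.IsGradedField) (hk : 𝒜.IsGradedSubfield k) (hs_fin : s.Finite)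
    (hs : ∀ a : s, (a : K) ∈ 𝒜.deg (φ (e a))) (hφ : ((𝒜.unitDegrees k).comap φ).FG) :
    (𝒜.pullback φ (Algebra.adjoin k s)).FG := by
  have := hs_fin.to_subtype
  rw [pullback_adjoin hk.1 hs]
  exact (fg_pullback_bot hK hk hφ).sup (Subalgebra.fg_def.mpr ⟨_, Set.finite_range _, rfl⟩)

theorem mem_unitDegrees_sup_range_of_comp_ne_zero (hK : 𝒜.IsGradedField)
    (hk : 𝒜.IsGradedSubfield k) (hs : ∀ a : s, (a : K) ∈ 𝒜.deg (φ (e a))) {a : K}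
    (ha : a ∈ Algebra.adjoin k s) {g : G} (hg : 𝒜.comp a g ≠ 0) :
    g ∈ 𝒜.unitDegrees k ⊔ φ.range := by
  rw [← Subalgebra.mem_toSubmodule, Algebra.adjoin_eq_span] at ha
  induction ha using Submodule.closure_induction with
  | zero => exact absurd (𝒜.comp_zero g) hg
  | add a b _ _ ha hb =>
    by_cases hag : 𝒜.comp a g = 0
    · exact hb (by rwa [comp_add, hag, zero_add] at hg)
    · exact ha hag
  | smul_mem c x hx =>
    obtain ⟨m, hxm, -⟩ := exists_single_mem_closure hs hx
    rw [Subring.smul_def, smul_eq_mul, comp_mul_of_mem hxm] at hg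
    let c' : k := ⟨𝒜.comp c (g * (φ m)⁻¹), hk.1 c c.2 _⟩
    have hc' : IsUnit c' := hk.isUnit hK ⟨_, 𝒜.comp_mem c _⟩ fun h =>
      hg (by rw [show 𝒜.comp c (g * (φ m)⁻¹) = 0 from congr(($h : K)), zero_mul])
    exact Subgroup.mem_sup.mpr ⟨_, ⟨hc'.unit, 𝒜.comp_mem c _⟩, _, ⟨m, rfl⟩,
      inv_mul_cancel_right g (φ m)⟩

end Generators

section Fractions

variable {𝒜} {k : Subring K} {F : Type*} [CommGroup F] {φ : F →* G} {A : Subalgebra k K}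

/-- `K` is the graded fraction field of `A`: every homogeneous element of `K` is the quotient of
an element of `A` by a nonzero homogeneous element of `A`. -/
def IsGradedFractionField (𝒜 : GradedStr G K) (A : Subalgebra k K) : Prop :=
  ∀ z, 𝒜.IsHomog z → ∃ a ∈ A, ∃ b ∈ A, 𝒜.IsHomog b ∧ b ≠ 0 ∧ z * b = a

theorem IsGradedFractionField.mem_of_mem_deg (hA : 𝒜.IsGradedFractionField A)
    (hK : 𝒜.IsGradedField) {H : Subgroup G} (hH : ∀ a ∈ A, ∀ g, 𝒜.comp a g ≠ 0 → g ∈ H) {g : G}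
    {z : K} (hz : z ∈ 𝒜.deg g) (hz_ne : z ≠ 0) : g ∈ H := by
  obtain ⟨a, ha, b, hb, ⟨h, hbh⟩, hb_ne, rfl⟩ := hA z ⟨g, hz⟩
  have hzb := 𝒜.mul_mem hz hbh
  have hzb_ne : z * b ≠ 0 := fun h => hb_ne ((hK.2 z ⟨g, hz⟩ hz_ne).mul_right_eq_zero.mp h)
  have hgh : g * h ∈ H := hH _ ha _ (by rwa [𝒜.comp_of_mem hzb])
  exact (H.mul_mem_cancel_right (hH b hb h (by rwa [𝒜.comp_of_mem hbh]))).mp hgh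

theorem IsGradedFractionField.exists_mul_single_mem_pullback (hA : 𝒜.IsGradedFractionField A)
    (hφ : ∀ {g : G} {z : K}, z ∈ 𝒜.deg g → z ≠ 0 → g ∈ 𝒜.unitDegrees k ⊔ φ.range) {m : F} {z : K}
    (hz : z ∈ 𝒜.deg (φ m)) :
    ∃ d : 𝒜.pullback φ A, d ≠ 0 ∧ d * MonoidAlgebra.single m z ∈ 𝒜.pullback φ A := by
  obtain ⟨a, ha, b, hb, ⟨g, hbg⟩, hb_ne, hzb⟩ := hA z ⟨_, hz⟩
  obtain ⟨u, _, ⟨n, rfl⟩, hub⟩ := 𝒜.exists_units_smul_mem_deg (hφ hbg hb_ne) hbg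
  have hub_ne : u • b ≠ 0 := (smul_ne_zero_iff_ne u).mpr hb_ne
  refine ⟨⟨_, single_mem_pullback (A.smul_mem hb (u : k)) hub⟩, fun h => hub_ne ?_, ?_⟩
  · exact MonoidAlgebra.single_eq_zero.mp congr(($h : MonoidAlgebra K F))
  · have huz : (u • b) * z = (u : k) • a := by rw [smul_mul_assoc, mul_comm b, hzb]; rfl
    rw [MonoidAlgebra.single_mul_single]
    exact single_mem_pullback (huz ▸ A.smul_mem ha (u : k)) (map_mul φ n m ▸ 𝒜.mul_mem hub hz)

theorem IsGradedFractionField.exists_mul_mem_pullback [UniqueProds F]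
    (hA : 𝒜.IsGradedFractionField A) (hK : 𝒜.IsGradedField)
    (hφ : ∀ {g : G} {z : K}, z ∈ 𝒜.deg g → z ≠ 0 → g ∈ 𝒜.unitDegrees k ⊔ φ.range)
    {f : MonoidAlgebra K F} (hf : f ∈ 𝒜.pullback φ (⊤ : Subalgebra k K)) :
    ∃ d : 𝒜.pullback φ A, d ≠ 0 ∧ d * f ∈ 𝒜.pullback φ A := by
  have := isDomain_pullback (A := A) (φ := φ) hK
  rw [← MonoidAlgebra.sum_coeff_single f]
  refine Finset.sum_induction _
    (fun f => ∃ d : 𝒜.pullback φ A, d ≠ 0 ∧ (d : MonoidAlgebra K F) * f ∈ 𝒜.pullback φ A)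
    ?_ ⟨1, one_ne_zero, by simp⟩ fun m _ => hA.exists_mul_single_mem_pullback hφ (hf m).2
  rintro f₁ f₂ ⟨d₁, hd₁, hf₁⟩ ⟨d₂, hd₂, hf₂⟩
  have hsum : d₂ * (d₁ * f₁) + d₁ * (d₂ * f₂) = ↑(d₁ * d₂) * (f₁ + f₂) := by
    rw [Subalgebra.coe_mul]
    ring
  refine ⟨d₁ * d₂, mul_ne_zero hd₁ hd₂, hsum ▸ ?_⟩
  exact Subalgebra.add_mem _ (Subalgebra.mul_mem _ d₂.2 hf₁) (Subalgebra.mul_mem _ d₁.2 hf₂)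

end Fractions

section Integrality

variable {k : Subring K} {F : Type*} [CommGroup F] (φ : F →* G) {A : Subalgebra k K}

/-- The projection of `K[F]` onto the pullback of `K` along `φ`, which replaces the coefficient of
each `m : F` by its component of degree `φ m`. -/
noncomputable def pullbackProj : MonoidAlgebra K F →+ MonoidAlgebra K F :=
  (Finsupp.liftAddHom fun m => (MonoidAlgebra.singleAddHom m).comp (𝒜.compHom (φ m))).comp
    MonoidAlgebra.coeffAddEquiv.toAddMonoidHom

theorem pullbackProj_single (m : F) (a : K) :
    𝒜.pullbackProj φ (.single m a) = .single m (𝒜.comp a (φ m)) := by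
  change (Finsupp.single m a).sum _ = _
  rw [Finsupp.sum_single_index]
  · rfl
  · exact map_zero _

variable {𝒜 φ}

theorem pullbackProj_mul_single {m : F} {b : K} (hb : b ∈ 𝒜.deg (φ m)) (f : MonoidAlgebra K F) :
    𝒜.pullbackProj φ (f * .single m b) = 𝒜.pullbackProj φ f * .single m b := by
  induction f using MonoidAlgebra.induction_linear with
  | zero => simp only [zero_mul, map_zero]
  | add f g hf hg => rw [add_mul, map_add, hf, hg, map_add, add_mul]
  | single n a =>
    rw [MonoidAlgebra.single_mul_single, pullbackProj_single, pullbackProj_single,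
      MonoidAlgebra.single_mul_single, comp_mul_of_mem hb, map_mul, mul_inv_cancel_right]

theorem isIntegral_single_pullback (hA : 𝒜.IsGradedSubring A.toSubring) {m : F} {b : K}
    (hb : b ∈ 𝒜.deg (φ m)) (hb_int : IsIntegral A b) :
    IsIntegral (𝒜.pullback φ A) (MonoidAlgebra.single m b) := by
  -- Scaling the roots of an equation of `b` by `single m 1` gives an equation of `single m b`;
  -- `pullbackProj` then makes its coefficients homogeneous.
  obtain ⟨p, hp, hp_mem, hp_eval⟩ := (integralOver_toSubring_iff A b).mpr hb_int
  let ι : K →+* MonoidAlgebra K F := MonoidAlgebra.singleOneRingHom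
  rw [← integralOver_toSubring_iff]
  refine integralOver_of_addMonoidHom (𝒜.pullbackProj φ)
    (p := (p.map ι).scaleRoots (MonoidAlgebra.single m 1)) ?_ (pullbackProj_mul_single hb)
    ((Polynomial.monic_scaleRoots_iff _).mpr (hp.map ι)) ?_ fun n => ?_
  · rw [MonoidAlgebra.one_def, pullbackProj_single, map_one, 𝒜.comp_of_mem 𝒜.one_mem]
  · have hb_eq : MonoidAlgebra.single m b = MonoidAlgebra.single m 1 * ι b := by simp [ι]
    have h := Polynomial.scaleRoots_eval₂_mul (p := p.map ι) (RingHom.id _) (ι b)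
      (MonoidAlgebra.single m 1)
    simpa [hb_eq, Polynomial.eval₂_id, Polynomial.eval_map_apply, hp_eval] using h
  · rw [Polynomial.coeff_scaleRoots, Polynomial.coeff_map, MonoidAlgebra.single_pow]
    change 𝒜.pullbackProj φ (MonoidAlgebra.single 1 _ * _) ∈ 𝒜.pullback φ A
    rw [MonoidAlgebra.single_mul_single, one_pow, mul_one, pullbackProj_single]
    exact single_mem_pullback (hA _ (hp_mem n) _) (𝒜.comp_mem _ _)

end Integrality

section Finiteness

variable {𝒜} {k : Subring K} {F : Type*} [CommGroup F] {φ : F →* G}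
  {A : Subalgebra k K}

theorem IsGradedFractionField.exists_finite_isIntegral_deg_map [UniqueProds F]
    (hA : 𝒜.IsGradedFractionField A) (hK : 𝒜.IsGradedField) (hk : 𝒜.IsGradedSubfield k)
    (hA_graded : 𝒜.IsGradedSubring A.toSubring) (hA_fg : (𝒜.pullback φ A).FG)
    (hφ : ∀ {g : G} {z : K}, z ∈ 𝒜.deg g → z ≠ 0 → g ∈ 𝒜.unitDegrees k ⊔ φ.range) :
    ∃ T : Set K, T.Finite ∧ (∀ t ∈ T, 𝒜.IsHomog t ∧ IsIntegral A t) ∧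
      ∀ m, ∀ z ∈ 𝒜.deg (φ m), IsIntegral A z → z ∈ Submodule.span A T := by
  let := (isField_degOneSubring 𝒜 hK hk).toField
  have := isDomain_pullback (A := (⊤ : Subalgebra k K)) (φ := φ) hK
  let X : Set (MonoidAlgebra K F) :=
    {f | ∃ m, ∃ b ∈ 𝒜.deg (φ m), IsIntegral A b ∧ f = MonoidAlgebra.single m b}
  have hX_fg : (Submodule.span (𝒜.pullback φ A) X).FG := by
    refine fg_span_of_isIntegral (E := 𝒜.pullback φ ⊤) (pullback_mono le_top) hA_fg
      (fun f hf => hA.exists_mul_mem_pullback hK hφ hf) ?_ ?_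
    · rintro _ ⟨m, b, hb, -, rfl⟩
      exact single_mem_pullback Algebra.mem_top hb
    · rintro _ ⟨m, b, hb, hb_int, rfl⟩
      exact isIntegral_single_pullback hA_graded hb hb_int
  obtain ⟨T, hTX, hT⟩ := (Submodule.fg_span_iff_fg_span_finset_subset X).mp hX_fg
  refine ⟨augmentation K F '' T, T.finite_toSet.image _, ?_, fun m z hz hz_int => ?_⟩
  · rintro _ ⟨x, hx, rfl⟩
    obtain ⟨m, b, hb, hb_int, rfl⟩ := hTX hx
    rw [augmentation_single]
    exact ⟨⟨_, hb⟩, hb_int⟩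
  · rw [← augmentation_single m z]
    refine map_mem_span_image (D := 𝒜.pullback φ A) (augmentation K F)
      (fun _ hf => augmentation_mem hf) ?_
    rw [← hT]
    exact Submodule.subset_span ⟨m, z, hz, hz_int, rfl⟩

theorem mem_span_of_isIntegral_comp {T : Set K}
    (hφ : ∀ {g : G} {z : K}, z ∈ 𝒜.deg g → z ≠ 0 → g ∈ 𝒜.unitDegrees k ⊔ φ.range)
    (hT : ∀ m, ∀ z ∈ 𝒜.deg (φ m), IsIntegral A z → z ∈ Submodule.span A T) {z : K}
    (hz : ∀ g, IsIntegral A (𝒜.comp z g)) : z ∈ Submodule.span A T := by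
  refine 𝒜.comp_induction z (Submodule.zero_mem _) (fun _ _ => Submodule.add_mem _) fun g => ?_
  rcases eq_or_ne (𝒜.comp z g) 0 with hzg | hzg
  · exact hzg ▸ Submodule.zero_mem _
  obtain ⟨u, _, ⟨m, rfl⟩, hu⟩ :=
    𝒜.exists_units_smul_mem_deg (hφ (𝒜.comp_mem z g) hzg) (𝒜.comp_mem z g)
  rw [← inv_smul_smul u (𝒜.comp z g)]
  exact Submodule.smul_of_tower_mem _ ((u⁻¹ : kˣ) : k) (hT m _ hu ((hz g).smul (u : k)))

end Finiteness

section IntegralClosure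

variable (R : Type*) [CommRing R] [Algebra R K]

variable {R 𝒜} in
theorem isIntegral_comp_of_isHomog {x : K} (hx : 𝒜.IsHomog x) (hx_int : IsIntegral R x) (g : G) :
    IsIntegral R (𝒜.comp x g) := by
  obtain ⟨h, hxh⟩ := hx
  rcases eq_or_ne g h with rfl | hg
  · rwa [𝒜.comp_of_mem hxh]
  · exact 𝒜.comp_of_mem_ne hxh hg ▸ isIntegral_zero

/-- The graded integral closure of `R` in the graded ring `K`: the elements all of whose
homogeneous components are integral over `R`. -/
def gradedIntegralClosure : Subring K where
  carrier := {z | ∀ g, IsIntegral R (𝒜.comp z g)}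
  zero_mem' g := by
    rw [comp_zero]
    exact isIntegral_zero
  one_mem' := isIntegral_comp_of_isHomog ⟨1, 𝒜.one_mem⟩ isIntegral_one
  add_mem' hx hy g := 𝒜.comp_add _ _ g ▸ (hx g).add (hy g)
  neg_mem' hx g := 𝒜.comp_neg _ g ▸ (hx g).neg
  mul_mem' {x y} hx hy := by
    refine 𝒜.comp_induction (motive := fun a => ∀ g, IsIntegral R (𝒜.comp (x * a) g)) y
      (fun g => ?_) (fun a b ha hb g => ?_) fun i g => ?_
    · rw [mul_zero, comp_zero]
      exact isIntegral_zero
    · rw [mul_add, comp_add]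
      exact (ha g).add (hb g)
    · rw [comp_mul_of_mem (𝒜.comp_mem y i)]
      exact (hx _).mul (hy i)

variable {𝒜} {k : Subring K} {s T : Set K}

theorem gradedIntegralClosure_adjoin_eq (hA : 𝒜.IsGradedSubring (Algebra.adjoin k s).toSubring)
    (hT : T ⊆ 𝒜.gradedIntegralClosure (Algebra.adjoin k s))
    (hT_span : (𝒜.gradedIntegralClosure (Algebra.adjoin k s) : Set K) ⊆
      Submodule.span (Algebra.adjoin k s) T) :
    𝒜.gradedIntegralClosure (Algebra.adjoin k s) = (Algebra.adjoin k (s ∪ T)).toSubring := by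
  have le_closure {a : K} (ha : a ∈ Algebra.adjoin k s) :
      a ∈ 𝒜.gradedIntegralClosure (Algebra.adjoin k s) := fun g =>
    isIntegral_algebraMap (x := (⟨_, hA a ha g⟩ : Algebra.adjoin k s))
  apply le_antisymm
  · intro z hz
    refine Submodule.span_induction (p := fun z _ => z ∈ Algebra.adjoin k (s ∪ T))
      (fun t ht => Algebra.subset_adjoin (.inr ht)) (Subalgebra.zero_mem _)
      (fun _ _ _ _ => Subalgebra.add_mem _) (fun a _ _ hx => ?_) (hT_span hz)
    exact Subalgebra.mul_mem _ (Algebra.adjoin_mono Set.subset_union_left a.2) hx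
  · rw [toSubring_adjoin_eq_closure, Subring.closure_le]
    rintro x (hx | hx | hx)
    · exact le_closure (Subalgebra.algebraMap_mem _ (⟨x, hx⟩ : k))
    · exact le_closure (Algebra.subset_adjoin hx)
    · exact hT hx

theorem IsGradedFractionField.exists_finite_gradedIntegralClosure_subset_span
    (hK : 𝒜.IsGradedField) (hk : 𝒜.IsGradedSubfield k) (hs_fin : s.Finite)
    (hs : ∀ a ∈ s, 𝒜.IsHomog a) (hA : 𝒜.IsGradedSubring (Algebra.adjoin k s).toSubring)
    (hA_frac : 𝒜.IsGradedFractionField (Algebra.adjoin k s)) :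
    ∃ T : Set K, T.Finite ∧
      (∀ t ∈ T, 𝒜.IsHomog t) ∧ T ⊆ 𝒜.gradedIntegralClosure (Algebra.adjoin k s) ∧
      (𝒜.gradedIntegralClosure (Algebra.adjoin k s) : Set K) ⊆
        Submodule.span (Algebra.adjoin k s) T := by
  have := hs_fin.to_subtype
  choose g hg using fun a : s => hs a a.2
  let φ : Multiplicative (s →₀ ℤ) →* G := AddMonoidHom.toMultiplicativeLeft
    (Finsupp.liftAddHom fun a => zmultiplesHom (Additive G) (.ofMul (g a)))
  let e (a : s) : Multiplicative (s →₀ ℤ) := .ofAdd (.single a 1)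
  have hφ_e (a : s) : (a : K) ∈ 𝒜.deg (φ (e a)) := by
    have : φ (e a) = g a := by simp [φ, e]
    exact this ▸ hg a
  have hφ {h : G} {z : K} (hz : z ∈ 𝒜.deg h) (hz_ne : z ≠ 0) : h ∈ 𝒜.unitDegrees k ⊔ φ.range :=
    hA_frac.mem_of_mem_deg hK
      (fun _ ha _ => mem_unitDegrees_sup_range_of_comp_ne_zero hK hk hφ_e ha) hz hz_ne
  have hA_fg := fg_pullback_adjoin hK hk hs_fin hφ_e (fg_subgroup_multiplicative_finsupp_int _)
  obtain ⟨T, hT_fin, hT, hT_span⟩ :=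
    hA_frac.exists_finite_isIntegral_deg_map hK hk hA hA_fg hφ
  exact ⟨T, hT_fin, fun t ht => (hT t ht).1,
    fun t ht => isIntegral_comp_of_isHomog (hT t ht).1 (hT t ht).2,
    fun z hz => mem_span_of_isIntegral_comp hφ hT_span hz⟩

end IntegralClosure

end GradedStr

/-- Let `k` be a `G`-graded field and `A` a finitely generated graded
`k`-algebra that is a graded domain, with graded fraction field `K = Frac_G(A)`
(realized as the ambient graded field: every homogeneous element of `K` is a ratio of
homogeneous elements of `A`).  Then the graded integral closure of `A` in `K` is a
finite `A`-module; in particular it is a finitely generated graded `k`-algebra. -/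
theorem graded_integral_closure_finite
    {G : Type u} [CommGroup G] {K : Type v} [CommRing K]
    (𝒜 : GradedStr G K) (hK : 𝒜.IsGradedField)
    (k : Subring K) (hk : 𝒜.IsGradedSubfield k)
    (A : Subring K) (hkA : k ≤ A) (hAgr : 𝒜.IsGradedSubring A)
    (hAfg : ∃ s : Finset K, (∀ a ∈ s, 𝒜.IsHomog a) ∧
      A = Subring.closure (↑k ∪ ↑s))
    (hfrac : ∀ z : K, 𝒜.IsHomog z →
      ∃ a ∈ A, ∃ b ∈ A, 𝒜.IsHomog b ∧ b ≠ 0 ∧ z * b = a) :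
    (∃ (n : ℕ) (e : Fin n → K),
      (∀ i, ∀ g, IntegralOver A (𝒜.comp (e i) g)) ∧
      ∀ z : K, (∀ g, IntegralOver A (𝒜.comp z g)) →
        ∃ c : Fin n → K, (∀ i, c i ∈ A) ∧ z = ∑ i, c i * e i) ∧
    (∃ (m : ℕ) (f : Fin m → K), (∀ i, 𝒜.IsHomog (f i)) ∧
      {z : K | ∀ g, IntegralOver A (𝒜.comp z g)}
        = ↑(Subring.closure (↑k ∪ Set.range f))) := by
  obtain ⟨s, hs, hA⟩ := hAfg
  obtain rfl : A = (Algebra.adjoin k s).toSubring :=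
    hA.trans (toSubring_adjoin_eq_closure k s).symm
  simp only [integralOver_toSubring_iff]
  obtain ⟨T, hT_fin, hT_homog, hT, hT_span⟩ :=
    GradedStr.IsGradedFractionField.exists_finite_gradedIntegralClosure_subset_span hK hk
      s.finite_toSet hs hAgr hfrac
  constructor
  · obtain ⟨n, e, rfl⟩ := hT_fin.fin_embedding
    refine ⟨n, e, fun i => hT ⟨i, rfl⟩, fun z hz => ?_⟩
    obtain ⟨c, rfl⟩ := (Submodule.mem_span_range_iff_exists_fun _).mp (hT_span hz)
    exact ⟨fun i => c i, fun i => (c i).2, rfl⟩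
  · obtain ⟨n, f, hf⟩ := (s.finite_toSet.union hT_fin).fin_embedding
    refine ⟨n, f, fun i => ?_, ?_⟩
    · exact (hf ▸ Set.mem_range_self i : f i ∈ ↑s ∪ T).elim (hs _) (hT_homog _)
    · rw [hf, ← toSubring_adjoin_eq_closure,
        ← GradedStr.gradedIntegralClosure_adjoin_eq hAgr hT hT_span]
      rfl
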